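/- Let d ≥ 0, n = 3+d, m < −1, and let a : ℝ × ℝ^{n−1} → ℂ be a symbol of order m with smooth parameters which is compactly supported in the parameter variable w ∈ ℝ^{n−1}. Write y = (y₁, y₂, y₃, y'') ∈ ℝ³ × ℝ^d and define v(y) = ∫_ℝ e^{i y₁ η} a(η, (y₂,y₃,y'')) dη (absolutely convergent since m < −1). Then v ∈ L²(ℝⁿ), and for all real κ, r ≥ 0 with κ + r < −m − 1/2 and all k₂, k₃ ≥ 0, the function ζ ↦ ⟨(ζ₁,ζ'')⟩^{κ} ⟨(ζ₂,ζ'')⟩^{k₂} ⟨(ζ₃,ζ'')⟩^{k₃} ⟨ζ⟩^{r} (𝓕v)(ζ) belongs to L²(ℝⁿ). In particular ⟨ζ⟩^{s}(𝓕v) ∈ L²(ℝⁿ) for every 0 ≤ s < −m − 1/2, i.e. v lies in the Sobolev space H^s(ℝⁿ). -/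

import Mathlib

open MeasureTheory
open scoped RealInnerProductSpace

noncomputable section

/-- Space `ℝⁿ` with `n = 3 + d`, written as `y = (y₁, y₂, y₃, y'')`. -/
abbrev Sp (d : ℕ) : Type := ℝ × ℝ × ℝ × EuclideanSpace ℝ (Fin d)

/-- The parameter space `ℝ^{n-1} = ℝ² × ℝᵈ`. -/
abbrev Par (d : ℕ) : Type := ℝ × ℝ × EuclideanSpace ℝ (Fin d)

/-- A symbol of order `m` with smooth parameters: `a(η, w)` is smooth and every
mixed derivative `∂_w^α ∂_η^β a` is bounded by `C (1+|η|)^{m-β}`. -/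
def IsSymbolP (d : ℕ) (m : ℝ) (a : ℝ × Par d → ℂ) : Prop :=
  ContDiff ℝ (⊤ : ℕ∞) a ∧ ∀ α β : ℕ, ∃ C : ℝ, ∀ (η : ℝ) (w : Par d),
    ‖iteratedFDeriv ℝ α (fun w' => iteratedDeriv β (fun η' => a (η', w')) η) w‖ ≤
      C * (1 + |η|) ^ (m - β)

/-- The Euclidean pairing `⟨y, ζ⟩` on `ℝⁿ = ℝ³ × ℝᵈ`. -/
def pairing (d : ℕ) (y ζ : Sp d) : ℝ :=
  y.1 * ζ.1 + y.2.1 * ζ.2.1 + y.2.2.1 * ζ.2.2.1 + ⟪y.2.2.2, ζ.2.2.2⟫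

/-- The Fourier transform `𝓕v(ζ) = ∫ e^{-i⟨y,ζ⟩} v(y) dy`. -/
def FT (d : ℕ) (v : Sp d → ℂ) (ζ : Sp d) : ℂ :=
  ∫ y : Sp d, Complex.exp (-(Complex.I * (pairing d y ζ : ℂ))) * v y ∂volume

/-- The conormal wave `v(y) = ∫ e^{i y₁ η} a(η, (y₂,y₃,y'')) dη`. -/
def v1 (d : ℕ) (a : ℝ × Par d → ℂ) (y : Sp d) : ℂ :=
  ∫ η : ℝ, Complex.exp (Complex.I * ((y.1 * η : ℝ) : ℂ)) * a (η, (y.2.1, y.2.2.1, y.2.2.2))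

open Real FourierTransform

lemma sym_deriv_bound {d : ℕ} {m : ℝ} {a : ℝ × Par d → ℂ} (ha : IsSymbolP d m a) (β : ℕ) :
    ∃ C : ℝ, 0 ≤ C ∧ ∀ (η : ℝ) (w : Par d),
      ‖iteratedDeriv β (fun η' => a (η', w)) η‖ ≤ C * (1 + |η|) ^ m := by
  obtain ⟨C, hC⟩ := ha.2 0 β
  refine ⟨|C|, abs_nonneg _, fun η w => ?_⟩
  have h := hC η w
  rw [norm_iteratedFDeriv_zero] at h
  have h1 : (1:ℝ) ≤ 1 + |η| := by linarith [abs_nonneg η]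
  calc _ ≤ C * (1 + |η|) ^ (m - β) := h
    _ ≤ |C| * (1 + |η|) ^ (m - β) := by gcongr; exact le_abs_self C
    _ ≤ |C| * (1 + |η|) ^ m := by
      refine mul_le_mul_of_nonneg_left ?_ (abs_nonneg C)
      exact Real.rpow_le_rpow_of_exponent_le h1 (by simp)

lemma sym_par_bound {d : ℕ} {m : ℝ} {a : ℝ × Par d → ℂ} (ha : IsSymbolP d m a) (α : ℕ) :
    ∃ C : ℝ, 0 ≤ C ∧ ∀ (η : ℝ) (w : Par d),
      ‖iteratedFDeriv ℝ α (fun w' => a (η, w')) w‖ ≤ C * (1 + |η|) ^ m := by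
  obtain ⟨C, hC⟩ := ha.2 α 0
  refine ⟨|C|, abs_nonneg _, fun η w => ?_⟩
  have h := hC η w
  simp only [iteratedDeriv_zero, Nat.cast_zero, sub_zero] at h
  exact h.trans (by gcongr; exact le_abs_self C)

lemma int_weight {m : ℝ} (hm : m < -1) : Integrable (fun η : ℝ => (1 + |η|) ^ m) := by
  have := integrable_one_add_norm (E := ℝ) (μ := volume) (r := -m) (by simp; linarith)
  simpa using this

lemma sym_slice_contDiff {d : ℕ} {m : ℝ} {a : ℝ × Par d → ℂ} (ha : IsSymbolP d m a) (w : Par d) :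
    ContDiff ℝ (⊤ : ℕ∞) (fun η => a (η, w)) := ha.1.comp (by fun_prop)

lemma sym_slice_contDiff' {d : ℕ} {m : ℝ} {a : ℝ × Par d → ℂ} (ha : IsSymbolP d m a) (η : ℝ) :
    ContDiff ℝ (⊤ : ℕ∞) (fun w => a (η, w)) := ha.1.comp (by fun_prop)

lemma sym_deriv_int {d : ℕ} {m : ℝ} (hm : m < -1) {a : ℝ × Par d → ℂ} (ha : IsSymbolP d m a)
    (β : ℕ) (w : Par d) : Integrable (iteratedDeriv β (fun η => a (η, w))) := by
  obtain ⟨C, hC, h⟩ := sym_deriv_bound ha β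
  refine ((int_weight hm).const_mul C).mono' ?_ (Filter.Eventually.of_forall fun η => h η w)
  exact ((sym_slice_contDiff ha w).continuous_iteratedDeriv β (by exact_mod_cast le_top)).aestronglyMeasurable

lemma v1_eq {d : ℕ} (a : ℝ × Par d → ℂ) (x : ℝ) (w : Par d) :
    v1 d a (x, w) = 𝓕⁻ (fun η => a (η, w)) (x / (2 * π)) := by
  rw [Real.fourierInv_eq']
  unfold v1
  congr 1
  ext η
  simp only [smul_eq_mul, RCLike.inner_apply, conj_trivial]
  congr 2
  push_cast
  field_simp

lemma v1_bound {d : ℕ} {m : ℝ} (hm : m < -1) {a : ℝ × Par d → ℂ} (ha : IsSymbolP d m a) :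
    ∃ C : ℝ, 0 ≤ C ∧ ∀ (x : ℝ) (w : Par d), ‖v1 d a (x, w)‖ ≤ C * (1 + x ^ 2)⁻¹ := by
  obtain ⟨C0, hC0, h0⟩ := sym_deriv_bound ha 0
  obtain ⟨C2, hC2, h2⟩ := sym_deriv_bound ha 2
  set I := ∫ η : ℝ, (1 + |η|) ^ m with hI
  have hIn : 0 ≤ I := integral_nonneg fun η => by positivity
  refine ⟨C0 * I + C2 * I, by positivity, fun x w => ?_⟩
  have key : ∀ (β : ℕ) (C : ℝ), (∀ (η : ℝ) (w : Par d),
      ‖iteratedDeriv β (fun η' => a (η', w)) η‖ ≤ C * (1 + |η|) ^ m) →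
      ∀ t, ‖𝓕 (iteratedDeriv β (fun η => a (η, w))) t‖ ≤ C * I := by
    intro β C h t
    refine (VectorFourier.norm_fourierIntegral_le_integral_norm _ _ _ _ _).trans ?_
    rw [hI, ← integral_const_mul]
    exact integral_mono (sym_deriv_int hm ha β w).norm ((int_weight hm).const_mul C) (fun η => h η w)
  have k0 := key 0 C0 h0 (-(x / (2 * π)))
  have k2 := key 2 C2 h2 (-(x / (2 * π)))
  rw [Real.fourier_iteratedDeriv (N := ⊤) (sym_slice_contDiff ha w)
    (fun n _ => sym_deriv_int hm ha n w) (by exact le_top)] at k2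
  rw [iteratedDeriv_zero] at k0
  rw [v1_eq, Real.fourierInv_eq_fourier_neg, ← div_eq_mul_inv, le_div_iff₀ (by positivity)]
  set F := 𝓕 (fun η => a (η, w)) (-(x / (2 * π)))
  have e : (2 * (π:ℂ) * Complex.I * ((-(x / (2 * π)) : ℝ) : ℂ)) = -(Complex.I * x) := by
    push_cast
    have : (π:ℂ) ≠ 0 := by exact_mod_cast Real.pi_ne_zero
    field_simp
  beta_reduce at k2
  rw [e, norm_smul, norm_pow, norm_neg, norm_mul, Complex.norm_I, one_mul, Complex.norm_real,
    Real.norm_eq_abs, sq_abs] at k2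
  linarith

lemma v1_cont {d : ℕ} {m : ℝ} (hm : m < -1) {a : ℝ × Par d → ℂ} (ha : IsSymbolP d m a) :
    Continuous (v1 d a) := by
  obtain ⟨C, hC, h⟩ := sym_deriv_bound ha 0
  have hc : Continuous a := ha.1.continuous
  refine continuous_of_dominated (bound := fun η => C * (1 + |η|) ^ m) (fun y => ?_) (fun y => ?_)
    ((int_weight hm).const_mul C) ?_
  · exact Continuous.aestronglyMeasurable (by fun_prop)
  · refine Filter.Eventually.of_forall fun η => ?_
    rw [norm_mul, mul_comm Complex.I, Complex.norm_exp_ofReal_mul_I, one_mul]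
    exact h η _
  · exact Filter.Eventually.of_forall fun η => by fun_prop

lemma v1_dom {d : ℕ} {m : ℝ} (hm : m < -1) {a : ℝ × Par d → ℂ} (ha : IsSymbolP d m a)
    {K : Set (Par d)} (hK : ∀ (η : ℝ) (w : Par d), w ∉ K → a (η, w) = 0) :
    ∃ C : ℝ, 0 ≤ C ∧ ∀ y : Sp d,
      ‖v1 d a y‖ ≤ (C * (1 + y.1 ^ 2)⁻¹) * K.indicator (fun _ => (1:ℝ)) y.2 := by
  obtain ⟨C, hC, h⟩ := v1_bound hm ha
  refine ⟨C, hC, fun y => ?_⟩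
  by_cases hy : y.2 ∈ K
  · simpa [hy] using h y.1 y.2
  · have : v1 d a y = 0 := by
      unfold v1
      simp [hK _ y.2 hy]
    simp [hy, this]

lemma int_ind {d : ℕ} {K : Set (Par d)} (hK : IsCompact K) :
    Integrable (K.indicator (fun _ => (1:ℝ))) (volume : Measure (Par d)) := by
  rw [integrable_indicator_iff hK.measurableSet]
  exact integrableOn_const hK.measure_lt_top.ne

lemma v1_int {d : ℕ} {m : ℝ} (hm : m < -1) {a : ℝ × Par d → ℂ} (ha : IsSymbolP d m a)
    {K : Set (Par d)} (hKc : IsCompact K) (hK : ∀ (η : ℝ) (w : Par d), w ∉ K → a (η, w) = 0) :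
    Integrable (v1 d a) := by
  obtain ⟨C, hC, h⟩ := v1_dom hm ha hK
  refine Integrable.mono' ?_ (v1_cont hm ha).aestronglyMeasurable (Filter.Eventually.of_forall h)
  exact (integrable_inv_one_add_sq.const_mul C).mul_prod (int_ind hKc)

lemma v1_memLp {d : ℕ} {m : ℝ} (hm : m < -1) {a : ℝ × Par d → ℂ} (ha : IsSymbolP d m a)
    {K : Set (Par d)} (hKc : IsCompact K) (hK : ∀ (η : ℝ) (w : Par d), w ∉ K → a (η, w) = 0) :
    MemLp (v1 d a) 2 volume := by
  rw [memLp_two_iff_integrable_sq_norm (v1_cont hm ha).aestronglyMeasurable]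
  obtain ⟨C, hC, h⟩ := v1_dom hm ha hK
  have hc := v1_cont hm ha
  have hi := ((v1_int hm ha hKc hK).norm.const_mul C)
  refine hi.mono' (Continuous.aestronglyMeasurable (by fun_prop))
    (Filter.Eventually.of_forall fun y => ?_)
  rw [Real.norm_of_nonneg (by positivity), sq]
  gcongr
  obtain ⟨C', hC', h'⟩ := v1_bound hm ha
  refine (h y).trans ?_
  have h1 : (1 + y.1 ^ 2)⁻¹ ≤ 1 := inv_le_one_of_one_le₀ (by nlinarith [sq_nonneg y.1])
  have h2 : K.indicator (fun _ => (1:ℝ)) y.2 ≤ 1 := Set.indicator_le_self' (by simp) _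
  have h3 : 0 ≤ K.indicator (fun _ => (1:ℝ)) y.2 := Set.indicator_nonneg (by simp) _
  calc _ ≤ C * 1 * 1 := by gcongr
    _ = C := by ring

instance haar_par2 (d : ℕ) :
    (volume : Measure (ℝ × EuclideanSpace ℝ (Fin d))).IsAddHaarMeasure := by
  rw [Measure.volume_eq_prod]
  infer_instance

instance haar_par (d : ℕ) : (volume : Measure (Par d)).IsAddHaarMeasure := by
  rw [Measure.volume_eq_prod]
  infer_instance

/-- The pairing on the parameter space as a continuous bilinear map. -/
def Lp' (d : ℕ) : Par d →L[ℝ] Par d →L[ℝ] ℝ :=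
  (ContinuousLinearMap.mul ℝ ℝ).bilinearComp (ContinuousLinearMap.fst ℝ _ _)
      (ContinuousLinearMap.fst ℝ _ _) +
  (ContinuousLinearMap.mul ℝ ℝ).bilinearComp
      ((ContinuousLinearMap.fst ℝ _ _).comp (ContinuousLinearMap.snd ℝ _ _))
      ((ContinuousLinearMap.fst ℝ _ _).comp (ContinuousLinearMap.snd ℝ _ _)) +
  (innerSL ℝ).bilinearComp
      ((ContinuousLinearMap.snd ℝ _ _).comp (ContinuousLinearMap.snd ℝ _ _))
      ((ContinuousLinearMap.snd ℝ _ _).comp (ContinuousLinearMap.snd ℝ _ _))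

lemma Lp'_apply {d : ℕ} (w ω : Par d) :
    Lp' d w ω = w.1 * ω.1 + w.2.1 * ω.2.1 + ⟪w.2.2, ω.2.2⟫ := by
  simp [Lp', innerSL_apply_apply]

lemma Lp'_self {d : ℕ} (ω : Par d) : ‖ω‖ ^ 2 ≤ Lp' d ω ω := by
  rw [Lp'_apply, real_inner_self_eq_norm_sq]
  have h1 : ‖ω‖ ≤ max |ω.1| (max |ω.2.1| ‖ω.2.2‖) := le_rfl
  have h2 := sq_abs ω.1
  have h3 := sq_abs ω.2.1
  have h0 := norm_nonneg ω
  rcases le_max_iff.1 h1 with h | h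
  · nlinarith [abs_nonneg ω.1, abs_nonneg ω.2.1, sq_nonneg ‖ω.2.2‖]
  rcases le_max_iff.1 h with h | h
  · nlinarith [abs_nonneg ω.1, abs_nonneg ω.2.1, sq_nonneg ‖ω.2.2‖]
  · nlinarith [abs_nonneg ω.1, abs_nonneg ω.2.1, sq_nonneg ‖ω.2.2‖]

/-- Partial Fourier transform of the symbol in the parameters. -/
def AF (d : ℕ) (a : ℝ × Par d → ℂ) (η : ℝ) (ω : Par d) : ℂ :=
  ∫ w : Par d, Complex.exp (-(Complex.I * (Lp' d w ω : ℂ))) * a (η, w)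

lemma AF_eq {d : ℕ} (a : ℝ × Par d → ℂ) (η : ℝ) (ω : Par d) :
    AF d a η ω = VectorFourier.fourierIntegral 𝐞 volume (Lp' d).toLinearMap₁₂
      (fun w => a (η, w)) ((2 * π)⁻¹ • ω) := by
  unfold AF VectorFourier.fourierIntegral
  congr 1
  ext w
  rw [Circle.smul_def, Real.fourierChar_apply, smul_eq_mul]
  congr 2
  have : (π:ℂ) ≠ 0 := by exact_mod_cast Real.pi_ne_zero
  have e : (Lp' d).toLinearMap₁₂ w ((2 * π)⁻¹ • ω) = (2 * π)⁻¹ * Lp' d w ω := by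
    simp
  rw [e]
  push_cast
  field_simp

lemma FT_eq {d : ℕ} {m : ℝ} (hm : m < -1) {a : ℝ × Par d → ℂ} (ha : IsSymbolP d m a)
    {K : Set (Par d)} (hKc : IsCompact K) (hK : ∀ (η : ℝ) (w : Par d), w ∉ K → a (η, w) = 0)
    (ζ : Sp d) : FT d (v1 d a) ζ = (2 * π) * AF d a ζ.1 ζ.2 := by
  have hpair : ∀ (x : ℝ) (w : Par d), pairing d (x, w) ζ = x * ζ.1 + Lp' d w ζ.2 := by
    intro x w
    rw [Lp'_apply]
    simp only [pairing]
    ring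
  have hpc : Continuous (fun y : Sp d => pairing d y ζ) := by
    unfold pairing
    fun_prop
  have hint : Integrable (fun y : Sp d =>
      Complex.exp (-(Complex.I * (pairing d y ζ : ℂ))) * v1 d a y)
      ((volume : Measure ℝ).prod (volume : Measure (Par d))) := by
    refine (v1_int hm ha hKc hK).norm.mono' ?_ (Filter.Eventually.of_forall fun y => ?_)
    · have := v1_cont hm ha
      exact Continuous.aestronglyMeasurable (by fun_prop)
    · rw [norm_mul, ← mul_neg, mul_comm Complex.I, ← Complex.ofReal_neg,
        Complex.norm_exp_ofReal_mul_I, one_mul]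
  unfold FT
  rw [Measure.volume_eq_prod, integral_prod_symm _ hint]
  unfold AF
  rw [← integral_const_mul]
  congr 1
  ext w
  have hF : Integrable (𝓕⁻ (fun η => a (η, w))) := by
    obtain ⟨C, hC, h⟩ := v1_bound hm ha
    have h1 : Integrable (fun x => v1 d a (x, w)) := by
      refine (integrable_inv_one_add_sq.const_mul C).mono' ?_
        (Filter.Eventually.of_forall fun x => h x w)
      have := v1_cont hm ha
      exact Continuous.aestronglyMeasurable (by fun_prop)
    simp_rw [v1_eq] at h1
    exact (integrable_comp_div_iff _ (by positivity : (2 * π) ≠ 0)).1 h1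
  have hF' : Integrable (𝓕 (fun η => a (η, w))) := by
    have := hF.comp_neg
    simpa [Real.fourierInv_eq_fourier_neg] using this
  have hi0 : Integrable (fun η => a (η, w)) := by
    simpa using sym_deriv_int hm ha 0 w
  have hinv := (sym_slice_contDiff ha w).continuous.fourier_fourierInv_eq hi0 hF'
  have hinv' := congrFun hinv ζ.1
  rw [Real.fourier_eq'] at hinv'
  calc ∫ x : ℝ, Complex.exp (-(Complex.I * (pairing d (x, w) ζ : ℂ))) * v1 d a (x, w)
      = ∫ x : ℝ, Complex.exp (-(Complex.I * (Lp' d w ζ.2 : ℂ))) *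
          (fun t : ℝ => Complex.exp (((-2 * π * inner ℝ t ζ.1 : ℝ) : ℂ) * Complex.I) •
            𝓕⁻ (fun η => a (η, w)) t) (x / (2 * π)) := by
        congr 1
        ext x
        rw [v1_eq, hpair]
        simp only [smul_eq_mul, ← mul_assoc, ← Complex.exp_add]
        congr 2
        simp only [RCLike.inner_apply, conj_trivial]
        push_cast
        have : (π:ℂ) ≠ 0 := by exact_mod_cast Real.pi_ne_zero
        field_simp
        ring
    _ = _ := by
        rw [integral_const_mul, Measure.integral_comp_div
          (fun t : ℝ => Complex.exp (((-2 * π * inner ℝ t ζ.1 : ℝ) : ℂ) * Complex.I) •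
            𝓕⁻ (fun η => a (η, w)) t), hinv', abs_of_pos (by positivity)]
        simp
        ring

lemma AF_bound {d : ℕ} {m : ℝ} {a : ℝ × Par d → ℂ} (ha : IsSymbolP d m a)
    {K : Set (Par d)} (hKc : IsCompact K) (hK : ∀ (η : ℝ) (w : Par d), w ∉ K → a (η, w) = 0)
    (N : ℕ) : ∃ C : ℝ, 0 ≤ C ∧ ∀ η ω, ‖ω‖ ^ N * ‖AF d a η ω‖ ≤ C * (1 + |η|) ^ m := by
  choose B hB0 hB using fun α => sym_par_bound ha α
  have hsub : ∀ η, tsupport (fun w => a (η, w)) ⊆ K := fun η => by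
    refine closure_minimal (fun w hw => ?_) hKc.isClosed
    by_contra h
    exact hw (hK η w h)
  have hcs : ∀ η, HasCompactSupport (fun w => a (η, w)) := fun η =>
    hKc.of_isClosed_subset (isClosed_tsupport _) (hsub η)
  have hdom : ∀ η n w, ‖iteratedFDeriv ℝ n (fun w => a (η, w)) w‖ ≤
      (B n * (1 + |η|) ^ m) * K.indicator (fun _ => (1:ℝ)) w := by
    intro η n w
    by_cases hw : w ∈ K
    · simpa [hw] using hB n η w
    · have : iteratedFDeriv ℝ n (fun w => a (η, w)) w = 0 := by
        by_contra h
        exact hw (hsub η (support_iteratedFDeriv_subset n h))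
      simp [hw, this]
  set V := ∫ w : Par d, K.indicator (fun _ => (1:ℝ)) w with hV
  have hV0 : 0 ≤ V := integral_nonneg fun w => Set.indicator_nonneg (by simp) _
  have hintg : ∀ η (k n : ℕ), Integrable
      (fun w : Par d => ‖w‖ ^ k * ‖iteratedFDeriv ℝ n (fun w => a (η, w)) w‖) := by
    intro η k n
    have hc : Continuous (iteratedFDeriv ℝ n (fun w => a (η, w))) :=
      (sym_slice_contDiff' ha η).continuous_iteratedFDeriv (by exact_mod_cast le_top)
    refine Continuous.integrable_of_hasCompactSupport (by fun_prop) ?_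
    exact ((hcs η).iteratedFDeriv n).norm.mul_left
  refine ⟨(2 * π) ^ N * (2 ^ N * ∑ n ∈ Finset.range (N + 1), B n * V), ?_, fun η ω => ?_⟩
  · have : ∀ n ∈ Finset.range (N + 1), 0 ≤ B n * V := fun n _ => mul_nonneg (hB0 n) hV0
    have := Finset.sum_nonneg this
    positivity
  rw [AF_eq]
  set ξ := (2 * π)⁻¹ • ω with hξ
  have hω : ‖ω‖ = 2 * π * ‖ξ‖ := by
    rw [hξ, norm_smul, Real.norm_of_nonneg (by positivity)]
    field_simp
  have main := VectorFourier.pow_mul_norm_iteratedFDeriv_fourierIntegral_le (Lp' d)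
    (μ := (volume : Measure (Par d))) (K := ⊤) (N := ⊤) (sym_slice_contDiff' ha η)
    (fun k n _ _ => hintg η k n) (k := 0) (n := N) (by exact le_top) (by exact le_top) ξ ξ
  rw [norm_iteratedFDeriv_zero] at main
  set F := VectorFourier.fourierIntegral 𝐞 volume (Lp' d).toLinearMap₁₂ (fun w => a (η, w)) ξ
  have hsum : ∑ p ∈ Finset.range (0 + 1) ×ˢ Finset.range (N + 1),
      ∫ w : Par d, ‖w‖ ^ p.1 * ‖iteratedFDeriv ℝ p.2 (fun w => a (η, w)) w‖ ≤
      (∑ n ∈ Finset.range (N + 1), B n * V) * (1 + |η|) ^ m := by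
    rw [Finset.sum_product]
    simp only [zero_add, Finset.range_one, Finset.sum_singleton, pow_zero, one_mul]
    rw [Finset.sum_mul]
    refine Finset.sum_le_sum fun n _ => ?_
    calc _ ≤ ∫ w : Par d, (B n * (1 + |η|) ^ m) * K.indicator (fun _ => (1:ℝ)) w :=
          integral_mono (by simpa using hintg η 0 n) ((int_ind hKc).const_mul _) (hdom η n)
      _ = B n * V * (1 + |η|) ^ m := by rw [integral_const_mul, ← hV]; ring
  have hle : ‖ξ‖ ^ N * (‖ξ‖ ^ N * ‖F‖) ≤
      ‖ξ‖ ^ N * (2 ^ N * ((∑ n ∈ Finset.range (N + 1), B n * V) * (1 + |η|) ^ m)) := by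
    calc ‖ξ‖ ^ N * (‖ξ‖ ^ N * ‖F‖) = (‖ξ‖ ^ 2) ^ N * ‖F‖ := by ring
      _ ≤ |Lp' d ξ ξ| ^ N * ‖F‖ := by
        gcongr
        exact (Lp'_self ξ).trans (le_abs_self _)
      _ ≤ _ := main
      _ ≤ _ := by
        simp only [pow_zero, mul_one, Nat.cast_zero, mul_zero, zero_add] at hsum ⊢
        rw [mul_assoc]
        gcongr
  have hle2 : ‖ξ‖ ^ N * ‖F‖ ≤
      2 ^ N * ((∑ n ∈ Finset.range (N + 1), B n * V) * (1 + |η|) ^ m) := by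
    by_cases h0 : ‖ξ‖ ^ N = 0
    · rw [h0, zero_mul]
      have : ∀ n ∈ Finset.range (N + 1), 0 ≤ B n * V := fun n _ => mul_nonneg (hB0 n) hV0
      have := Finset.sum_nonneg this
      positivity
    · exact le_of_mul_le_mul_left hle (lt_of_le_of_ne (by positivity) (Ne.symm h0))
  rw [hω, mul_pow]
  calc _ = (2 * π) ^ N * (‖ξ‖ ^ N * ‖F‖) := by ring
    _ ≤ (2 * π) ^ N * (2 ^ N * ((∑ n ∈ Finset.range (N + 1), B n * V) * (1 + |η|) ^ m)) := by
      gcongr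
    _ = _ := by ring

lemma AF_bound' {d : ℕ} {m : ℝ} {a : ℝ × Par d → ℂ} (ha : IsSymbolP d m a)
    {K : Set (Par d)} (hKc : IsCompact K) (hK : ∀ (η : ℝ) (w : Par d), w ∉ K → a (η, w) = 0)
    (N : ℕ) : ∃ C : ℝ, 0 ≤ C ∧ ∀ η ω, (1 + ‖ω‖) ^ N * ‖AF d a η ω‖ ≤ C * (1 + |η|) ^ m := by
  obtain ⟨C0, h0, H0⟩ := AF_bound ha hKc hK 0
  obtain ⟨C1, h1, H1⟩ := AF_bound ha hKc hK N
  refine ⟨2 ^ (N - 1) * (C0 + C1), by positivity, fun η ω => ?_⟩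
  have := add_pow_le (zero_le_one (α := ℝ)) (norm_nonneg ω) N
  have k0 := H0 η ω
  have k1 := H1 η ω
  rw [pow_zero] at k0
  rw [one_pow] at this
  calc _ ≤ 2 ^ (N - 1) * (1 + ‖ω‖ ^ N) * ‖AF d a η ω‖ := by gcongr
    _ = 2 ^ (N - 1) * (1 * ‖AF d a η ω‖ + ‖ω‖ ^ N * ‖AF d a η ω‖) := by ring
    _ ≤ 2 ^ (N - 1) * (C0 * (1 + |η|) ^ m + C1 * (1 + |η|) ^ m) := by gcongr
    _ = _ := by ring

lemma FT_cont {d : ℕ} {v : Sp d → ℂ} (hv : Integrable v) : Continuous (FT d v) := by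
  have hp : Continuous (fun p : Sp d × Sp d => pairing d p.1 p.2) := by
    unfold pairing
    fun_prop
  refine continuous_of_dominated (bound := fun y => ‖v y‖) (fun ζ => ?_) (fun ζ => ?_) hv.norm ?_
  · have : Continuous (fun y : Sp d => pairing d y ζ) := hp.comp (Continuous.prodMk continuous_id continuous_const)
    exact AEStronglyMeasurable.mul (Continuous.aestronglyMeasurable (by fun_prop)) hv.1
  · refine Filter.Eventually.of_forall fun y => ?_
    rw [norm_mul, ← mul_neg, mul_comm Complex.I, ← Complex.ofReal_neg,
        Complex.norm_exp_ofReal_mul_I, one_mul]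
  · refine Filter.Eventually.of_forall fun y => ?_
    have : Continuous (fun ζ : Sp d => pairing d y ζ) := hp.comp (Continuous.prodMk continuous_const continuous_id)
    fun_prop

lemma wt_bound {X Y s : ℝ} (hX : 0 ≤ X) (hY : 0 ≤ Y) (hs : 0 ≤ s) (h : X ≤ Y ^ 2) :
    X ^ (s / 2) ≤ Y ^ s := by
  calc X ^ (s / 2) ≤ (Y ^ 2) ^ (s / 2) := by gcongr
    _ = Y ^ s := by
      rw [← Real.rpow_natCast, ← Real.rpow_mul hY]
      congr 1
      push_cast
      ring

set_option maxHeartbeats 1000000 in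
lemma main_memLp {d : ℕ} {m : ℝ} (hm : m < -1) {a : ℝ × Par d → ℂ} (ha : IsSymbolP d m a)
    {K : Set (Par d)} (hKc : IsCompact K) (hK : ∀ (η : ℝ) (w : Par d), w ∉ K → a (η, w) = 0)
    (κ r k₂ k₃ : ℝ) (hκ : 0 ≤ κ) (hr : 0 ≤ r) (hκr : κ + r < -m - 1/2) (h2 : 0 ≤ k₂)
    (h3 : 0 ≤ k₃) :
      MemLp (fun ζ : Sp d =>
        ((1 + ζ.1 ^ 2 + ‖ζ.2.2.2‖ ^ 2) ^ (κ / 2) *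
         (1 + ζ.2.1 ^ 2 + ‖ζ.2.2.2‖ ^ 2) ^ (k₂ / 2) *
         (1 + ζ.2.2.1 ^ 2 + ‖ζ.2.2.2‖ ^ 2) ^ (k₃ / 2) *
         (1 + ζ.1 ^ 2 + ζ.2.1 ^ 2 + ζ.2.2.1 ^ 2 + ‖ζ.2.2.2‖ ^ 2) ^ (r / 2)) •
          FT d (v1 d a) ζ) 2 volume := by
  set S := κ + r + k₂ + k₃ with hS
  set D := Module.finrank ℝ (Par d) with hD
  obtain ⟨N, hN⟩ := exists_nat_ge (S + D + 1)
  obtain ⟨C, hC, hAF⟩ := AF_bound' ha hKc hK N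
  have hg : MemLp (fun ζ : Sp d => (1 + |ζ.1|) ^ (κ + r + m) * (1 + ‖ζ.2‖) ^ (-((D:ℝ) + 1)))
      2 volume := by
    have hne1 : ∀ x : ℝ, (1 + |x|) ≠ 0 := fun x => by positivity
    have hne2 : ∀ x : Par d, (1 + ‖x‖) ≠ 0 := fun x => by positivity
    have hcg : Continuous (fun ζ : Sp d =>
        (1 + |ζ.1|) ^ (κ + r + m) * (1 + ‖ζ.2‖) ^ (-((D:ℝ) + 1))) := by
      refine Continuous.mul ?_ ?_
      · exact Continuous.rpow_const (by fun_prop) (fun ζ => Or.inl (hne1 _))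
      · exact Continuous.rpow_const (by fun_prop) (fun ζ => Or.inl (hne2 _))
    rw [memLp_two_iff_integrable_sq_norm hcg.aestronglyMeasurable]
    have i1 := integrable_one_add_norm (E := ℝ) (μ := volume) (r := -(2 * (κ + r + m)))
      (by simp; linarith)
    have i2 := integrable_one_add_norm (E := Par d) (μ := volume) (r := 2 * ((D:ℝ) + 1))
      (by rw [← hD]; linarith [(Nat.cast_nonneg D : (0:ℝ) ≤ D)])
    refine (i1.mul_prod i2).congr (Filter.Eventually.of_forall fun ζ => ?_)
    have hsq : ∀ (x t : ℝ), 0 < x → (x ^ t) ^ 2 = x ^ (2 * t) := fun x t hx => by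
      rw [← Real.rpow_natCast, ← Real.rpow_mul hx.le, mul_comm]
      norm_num
    simp only [Real.norm_eq_abs, sq_abs, mul_pow]
    rw [hsq _ _ (by positivity), hsq _ _ (by positivity)]
    congr 2
    · ring
    · ring
  refine MemLp.of_le_mul (c := 2 ^ S * (2 * π) * C) hg ?_ (Filter.Eventually.of_forall fun ζ => ?_)
  · have hc := FT_cont (v1_int hm ha hKc hK)
    have hmeas := hc.measurable
    refine Measurable.aestronglyMeasurable ?_
    fun_prop
  obtain ⟨x, w⟩ := ζ
  have hA := hAF x w
  rw [FT_eq hm ha hKc hK]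
  dsimp only
  set P := 1 + |x| with hP
  set T := 1 + ‖w‖ with hT
  have hP1 : 1 ≤ P := by linarith [abs_nonneg x]
  have hT1 : 1 ≤ T := by linarith [norm_nonneg w]
  have hP0 : 0 < P := by linarith
  have hT0 : 0 < T := by linarith
  have hw1 : |w.1| ≤ ‖w‖ := norm_fst_le w
  have hw2 : |w.2.1| ≤ ‖w‖ := (norm_fst_le w.2).trans (norm_snd_le w)
  have hw3 : ‖w.2.2‖ ≤ ‖w‖ := (norm_snd_le w.2).trans (norm_snd_le w)
  have q1 : w.1 ^ 2 ≤ ‖w‖ ^ 2 := by rw [← sq_abs]; gcongr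
  have q2 : w.2.1 ^ 2 ≤ ‖w‖ ^ 2 := by rw [← sq_abs]; gcongr
  have q3 : ‖w.2.2‖ ^ 2 ≤ ‖w‖ ^ 2 := by gcongr
  have qT : ‖w‖ ^ 2 + 1 ≤ T ^ 2 := by rw [hT]; nlinarith [norm_nonneg w]
  have qP : x ^ 2 + 1 ≤ P ^ 2 := by rw [hP, ← sq_abs x]; nlinarith [abs_nonneg x]
  have qPT : x ^ 2 + 1 + ‖w‖ ^ 2 ≤ P ^ 2 * T ^ 2 := by
    nlinarith [mul_le_mul qP qT (by positivity) (by positivity), sq_nonneg (x * ‖w‖)]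
  have b1 := wt_bound (X := 1 + x ^ 2 + ‖w.2.2‖ ^ 2) (Y := 2 * P * T) (by positivity)
    (by positivity) hκ (by nlinarith [sq_nonneg x, sq_nonneg ‖w‖])
  have b2 := wt_bound (X := 1 + w.1 ^ 2 + ‖w.2.2‖ ^ 2) (Y := 2 * T) (by positivity)
    (by positivity) h2 (by nlinarith)
  have b3 := wt_bound (X := 1 + w.2.1 ^ 2 + ‖w.2.2‖ ^ 2) (Y := 2 * T) (by positivity)
    (by positivity) h3 (by nlinarith)
  have b4 := wt_bound (X := 1 + x ^ 2 + w.1 ^ 2 + w.2.1 ^ 2 + ‖w.2.2‖ ^ 2) (Y := 2 * P * T)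
    (by positivity) (by positivity) hr (by nlinarith [sq_nonneg x, sq_nonneg ‖w‖])
  have hW : (1 + x ^ 2 + ‖w.2.2‖ ^ 2) ^ (κ / 2) * (1 + w.1 ^ 2 + ‖w.2.2‖ ^ 2) ^ (k₂ / 2) *
      (1 + w.2.1 ^ 2 + ‖w.2.2‖ ^ 2) ^ (k₃ / 2) *
      (1 + x ^ 2 + w.1 ^ 2 + w.2.1 ^ 2 + ‖w.2.2‖ ^ 2) ^ (r / 2) ≤
      2 ^ S * P ^ (κ + r) * T ^ S := by
    calc _ ≤ (2 * P * T) ^ κ * (2 * T) ^ k₂ * (2 * T) ^ k₃ * (2 * P * T) ^ r := by gcongr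
      _ = _ := by
        rw [hS]
        simp only [Real.mul_rpow (by positivity : (0:ℝ) ≤ 2 * P) hT0.le,
          Real.mul_rpow (by positivity : (0:ℝ) ≤ 2) hT0.le,
          Real.mul_rpow (by positivity : (0:ℝ) ≤ 2) hP0.le,
          Real.rpow_add hT0, Real.rpow_add hP0, Real.rpow_add (by norm_num : (0:ℝ) < 2)]
        ring
  rw [norm_smul, Real.norm_of_nonneg (by positivity), norm_mul]
  have hn : ‖(2 * π : ℂ)‖ = 2 * π := by
    rw [norm_mul, Complex.norm_real, Real.norm_of_nonneg Real.pi_pos.le]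
    norm_num
  rw [hn, Real.norm_of_nonneg (by positivity)]
  have hTS : T ^ S ≤ T ^ (-((D:ℝ) + 1)) * T ^ N := by
    rw [← Real.rpow_natCast T N, ← Real.rpow_add hT0]
    exact Real.rpow_le_rpow_of_exponent_le hT1 (by linarith)
  calc _ ≤ (2 ^ S * P ^ (κ + r) * T ^ S) * (2 * π * ‖AF d a x w‖) := by gcongr
    _ ≤ (2 ^ S * P ^ (κ + r) * (T ^ (-((D:ℝ) + 1)) * T ^ N)) * (2 * π * ‖AF d a x w‖) := by
      gcongr
    _ = 2 ^ S * (2 * π) * P ^ (κ + r) * T ^ (-((D:ℝ) + 1)) * (T ^ N * ‖AF d a x w‖) := by ring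
    _ ≤ 2 ^ S * (2 * π) * P ^ (κ + r) * T ^ (-((D:ℝ) + 1)) * (C * P ^ m) := by gcongr
    _ = _ := by
      rw [Real.rpow_add hP0 (κ + r) m]
      ring

/-- **Local-model form of Proposition 5.19:** a distribution conormal to the
hypersurface `{y₁ = 0}` with elliptic-order-`m` symbol, compactly supported in
the parameters, lies in `L²`, in the anisotropic weighted spaces
`H^{r,κ,k₂,k₃}` for `κ + r < -m - 1/2` and arbitrary `k₂, k₃ ≥ 0`, and in the
Sobolev space `H^s` for `0 ≤ s < -m - 1/2`. -/
theorem stmt_14 (d : ℕ) (m : ℝ) (hm : m < -1)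
    (a : ℝ × Par d → ℂ) (ha : IsSymbolP d m a)
    (hsupp : ∃ K : Set (Par d), IsCompact K ∧ ∀ (η : ℝ) (w : Par d), w ∉ K → a (η, w) = 0) :
    MemLp (v1 d a) 2 volume ∧
    (∀ κ r k₂ k₃ : ℝ, 0 ≤ κ → 0 ≤ r → κ + r < -m - 1/2 → 0 ≤ k₂ → 0 ≤ k₃ →
      MemLp (fun ζ : Sp d =>
        ((1 + ζ.1 ^ 2 + ‖ζ.2.2.2‖ ^ 2) ^ (κ / 2) *
         (1 + ζ.2.1 ^ 2 + ‖ζ.2.2.2‖ ^ 2) ^ (k₂ / 2) *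
         (1 + ζ.2.2.1 ^ 2 + ‖ζ.2.2.2‖ ^ 2) ^ (k₃ / 2) *
         (1 + ζ.1 ^ 2 + ζ.2.1 ^ 2 + ζ.2.2.1 ^ 2 + ‖ζ.2.2.2‖ ^ 2) ^ (r / 2)) •
          FT d (v1 d a) ζ) 2 volume) ∧
    (∀ s : ℝ, 0 ≤ s → s < -m - 1/2 →
      MemLp (fun ζ : Sp d =>
        ((1 + ζ.1 ^ 2 + ζ.2.1 ^ 2 + ζ.2.2.1 ^ 2 + ‖ζ.2.2.2‖ ^ 2) ^ (s / 2)) •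
          FT d (v1 d a) ζ) 2 volume) := by
  obtain ⟨K, hKc, hK⟩ := hsupp
  refine ⟨v1_memLp hm ha hKc hK, fun κ r k₂ k₃ hκ hr h h2 h3 =>
    main_memLp hm ha hKc hK κ r k₂ k₃ hκ hr h h2 h3, fun s hs hs' => ?_⟩
  simpa using main_memLp hm ha hKc hK 0 s 0 0 le_rfl hs (by linarith) le_rfl le_rfl
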